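/- For every (m+1)-colored rooted tree τ, the ramification function 𝔯 defined by 𝔯(∅)=0, 𝔯(•_l)=1, 𝔯([τ₁]_l)=𝔯(τ₁), and 𝔯([τ₁,…,τ_κ]_l)=1+max_j 𝔯(τ_j) for κ≥2, satisfies: if 𝔯(τ)=k with k≥1, then ρ(τ) ≥ k − 1/2. -/

import Mathlib

inductive CTree (m : ℕ) : Type
  | node : Fin (m + 1) → List (CTree m) → CTree m

namespace CTree

variable {m : ℕ}

def rho : CTree m → ℚ
  | .node l ts => (if (l : ℕ) = 0 then 1 else 1/2) + (ts.attach.map (fun t => rho t.1)).sum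
decreasing_by
  all_goals try simp only [CTree.node.sizeOf_spec, List.cons.sizeOf_spec, List.nil.sizeOf_spec]
  all_goals try have := List.sizeOf_lt_of_mem t.2
  all_goals omega

def height : CTree m → ℕ
  | .node _ ts => 1 + (ts.attach.map (fun t => height t.1)).foldr max 0
decreasing_by
  all_goals try simp only [CTree.node.sizeOf_spec, List.cons.sizeOf_spec, List.nil.sizeOf_spec]
  all_goals try have := List.sizeOf_lt_of_mem t.2
  all_goals omega

def ram : CTree m → ℕ
  | .node _ [] => 1
  | .node _ [t] => ram t
  | .node _ ts => 1 + (ts.attach.map (fun t => ram t.1)).foldr max 0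
decreasing_by
  all_goals try simp only [CTree.node.sizeOf_spec, List.cons.sizeOf_spec, List.nil.sizeOf_spec]
  all_goals try have := List.sizeOf_lt_of_mem t.2
  all_goals omega

def dbl : CTree m → ℕ
  | .node _ [] => 1
  | .node _ ts =>
      let ds := ts.attach.map (fun t => dbl t.1)
      let M := ds.foldr max 0
      if 2 ≤ ds.count M then M + 1 else M
decreasing_by
  all_goals try simp only [CTree.node.sizeOf_spec, List.cons.sizeOf_spec, List.nil.sizeOf_spec]
  all_goals try have := List.sizeOf_lt_of_mem t.2
  all_goals omega


end CTree

theorem aux_list {α : Type*} (f : α → ℚ) (g : α → ℕ) (ts : List α)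
    (h1 : ∀ t ∈ ts, 1/2 ≤ f t) (h2 : ∀ t ∈ ts, (g t : ℚ) - 1/2 ≤ f t) :
    (ts.length : ℚ)/2 ≤ (ts.map f).sum ∧
    (((ts.map g).foldr max 0 : ℕ) : ℚ) + (ts.length : ℚ)/2 ≤ (ts.map f).sum + 1 := by
  induction ts with
  | nil => simp
  | cons t ts ih =>
    obtain ⟨a, b⟩ := ih (fun x hx => h1 x (List.mem_cons_of_mem _ hx))
      (fun x hx => h2 x (List.mem_cons_of_mem _ hx))
    have c := h1 t List.mem_cons_self
    have d := h2 t List.mem_cons_self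
    simp only [List.map_cons, List.sum_cons, List.foldr_cons, List.length_cons]
    push_cast
    refine ⟨by linarith, ?_⟩
    rcases max_cases (g t : ℚ) (((ts.map g).foldr max 0 : ℕ) : ℚ) with ⟨e, _⟩ | ⟨e, _⟩ <;>
      rw [e] <;> linarith

open CTree in
theorem aux_main {m : ℕ} : ∀ τ : CTree m, 1/2 ≤ rho τ ∧ (ram τ : ℚ) - 1/2 ≤ rho τ
  | .node l ts => by
    have ih : ∀ t ∈ ts, 1/2 ≤ rho t ∧ (ram t : ℚ) - 1/2 ≤ rho t := fun t ht => aux_main t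
    obtain ⟨a, b⟩ := aux_list rho ram ts (fun t ht => (ih t ht).1) (fun t ht => (ih t ht).2)
    have hr : rho (.node l ts) = (if (l : ℕ) = 0 then 1 else 1/2) + (ts.map rho).sum := by
      rw [rho, List.attach_map_val]
    have hc : (1/2 : ℚ) ≤ (if (l : ℕ) = 0 then 1 else 1/2) := by split_ifs <;> norm_num
    have hn : (0 : ℚ) ≤ (ts.length : ℚ)/2 := by positivity
    refine ⟨by linarith, ?_⟩
    match ts, ih, a, b, hr, hn with
    | [], _, a, b, hr, hn => rw [ram]; push_cast; linarith
    | [t], ih, a, b, hr, hn =>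
      have := (ih t (by simp)).2
      simp only [List.map_cons, List.map_nil, List.sum_cons, List.sum_nil] at hr
      rw [ram]; linarith
    | t :: u :: ts, ih, a, b, hr, hn =>
      have e : ram (.node l (t :: u :: ts)) = 1 + ((t :: u :: ts).map ram).foldr max 0 := by
        rw [ram, List.attach_map_val]
        all_goals simp
      have hl : (2 : ℚ) ≤ ((t :: u :: ts).length : ℚ) := by
        simp only [List.length_cons]; push_cast
        have : (0 : ℚ) ≤ ts.length := by positivity
        linarith
      rw [e]
      push_cast at b ⊢
      linarith
termination_by τ => sizeOf τ
decreasing_by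
  have := List.sizeOf_lt_of_mem ht
  simp only [CTree.node.sizeOf_spec]
  omega

open CTree in
theorem stmt1 (m : ℕ) (τ : CTree m) (k : ℕ) (hk : 1 ≤ k) (h : ram τ = k) :
    (k : ℚ) - 1/2 ≤ rho τ := by 
  subst h
  exact (aux_main τ).2
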